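/- Let λ = (λ₁ ≥ … ≥ λ_n ≥ 0) and μ = (μ₁ ≥ … ≥ μ_m ≥ 0) be partitions, and let x = (x₁,…,x_N) and y = (y₁,…,y_M) be two disjoint sets of variables. Define the (m+n) × (m+n) matrix M with entries M_{ij} = h_{μ_{m+1−i} + i − j}(y) for 1 ≤ i ≤ m and M_{ij} = h_{λ_{i−m} − (i−m) + (j−m)}(x) for m < i ≤ m+n (1 ≤ j ≤ m+n). Let g ∈ S_{m+n} be a minimal-length representative of a left coset of S_m × S_n, let C = {g(1),…,g(m)}, and let τ = τ(g). Then sgn(g) · det(M[{1,…,m}, C]) · det(M[{m+1,…,m+n}, C^c]) = (−1)^{|τ|} s_{μ/τ'}(y) · s_{λ/τ}(x), where M[R, C] denotes the submatrix with rows R and columns C taken in increasing order. -/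

import Mathlib

open MvPolynomial

/-- The conjugate partition, with 1-based index: `conjugatePart l i = #{ j : l_j ≥ i }`,
where `l : ℕ → ℕ` lists the parts 0-based (`l 0 = λ₁`). -/
noncomputable def conjugatePart (l : ℕ → ℕ) (i : ℕ) : ℕ :=
  Set.ncard {j : ℕ | i ≤ l j}

/-- The complete homogeneous symmetric polynomial in `N` variables with an integer index:
`h_k` for `k ≥ 0`, and `0` for `k < 0`. -/
noncomputable def hInt (N : ℕ) (k : ℤ) : MvPolynomial (Fin N) ℤ :=
  if 0 ≤ k then MvPolynomial.hsymm (Fin N) ℤ k.toNat else 0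

/-- `g ∈ S_{m+n}` (acting on `Fin (m+n)`, 0-based) is the minimal-length representative of
its left coset of `S_m × S_n` exactly when it is increasing on the first `m` points and
increasing on the last `n` points. -/
def IsMinRep (m n : ℕ) (g : Equiv.Perm (Fin (m + n))) : Prop :=
  (∀ i j : Fin (m + n), i < j → (j : ℕ) < m → g i < g j) ∧
  (∀ i j : Fin (m + n), i < j → m ≤ (i : ℕ) → g i < g j)

/-- Position `p` of the word `w(g)` carries the symbol `×` iff `p` is the image under `g`
of one of the first `m` points; otherwise it carries `○`. -/
def IsCross (m n : ℕ) (g : Equiv.Perm (Fin (m + n))) (p : Fin (m + n)) : Prop :=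
  ∃ i : Fin (m + n), (i : ℕ) < m ∧ g i = p

open scoped Classical in
/-- The partition `τ(g)`, presented as the multiset of its (positive) parts: each `○`
symbol of the word `w(g)` contributes a part equal to the number of `×` symbols strictly
to its right; zero contributions are not parts. -/
noncomputable def tauOf (m n : ℕ) (g : Equiv.Perm (Fin (m + n))) : Multiset ℕ :=
  (((Finset.univ.filter fun p : Fin (m + n) => ¬ IsCross m n g p).val).map fun p =>
      (Finset.univ.filter fun q : Fin (m + n) => p < q ∧ IsCross m n g q).card).filter
    (· ≠ 0)

/-- The parts of `τ(g)` listed in weakly decreasing order, as a function `ℕ → ℕ`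
(0-based and padded with zeros): `tauParts m n g k` is `τ(g)_{k+1}`. -/
noncomputable def tauParts (m n : ℕ) (g : Equiv.Perm (Fin (m + n))) : ℕ → ℕ :=
  fun k => (((tauOf m n g).sort (· ≤ ·)).reverse).getD k 0

/-!
In the word `w(g)` let `σ_j` be the number of `×` to the right of the `j`-th `○`. Minimality of `g`
makes `σ` weakly decreasing, so `σ = τ`, and dually the number of `○` to the left of the `i`-th `×`
is `τ'_{m+1-i}`. Counting the symbols to the left of a given one locates the `j`-th `○` at position
`m + j - τ_j` and the `i`-th `×` at position `i + τ'_{m+1-i}`. Substituting these column indices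
turns the bottom minor into the Jacobi–Trudi determinant of `λ/τ`, and the top minor, after
reversing the order of its rows and of its columns, into that of `μ/τ'`. The inversions of `g` are
the pairs `○ … ×`, and there are `|τ|` of them.
-/

section Fin

open Finset

variable {m n : ℕ}

theorem castAdd_lt_natAdd (i : Fin m) (j : Fin n) : Fin.castAdd n i < Fin.natAdd m j := by
  rw [Fin.lt_def, Fin.val_castAdd, Fin.val_natAdd]
  omega

theorem prod_Iio_natAdd {α : Type*} [CommMonoid α] (f : Fin (m + n) → α) (j : Fin n) :
    ∏ k < Fin.natAdd m j, f k =
      (∏ i, f (Fin.castAdd n i)) * ∏ k < j, f (Fin.natAdd m k) := by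
  simp only [← filter_gt_eq_Iio, prod_filter, Fin.prod_univ_add, castAdd_lt_natAdd, if_true,
    Fin.natAdd_lt_natAdd_iff]

theorem card_filter_lt_of_strictMono {α : Type*} [Preorder α] [DecidableLT α] {f : Fin n → α}
    (hf : StrictMono f) (i : Fin n) : #{k | f k < f i} = i := by
  simp only [hf.lt_iff_lt, filter_gt_eq_Iio, Fin.card_Iio]

theorem card_castAdd_lt_add_card_natAdd_lt (g : Equiv.Perm (Fin (m + n))) (p : Fin (m + n)) :
    #{i : Fin m | g (Fin.castAdd n i) < p} + #{j : Fin n | g (Fin.natAdd m j) < p} = p := by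
  have hcard : #{q : Fin (m + n) | g q < p} = p := by
    rw [← Fin.card_Iio p]
    exact card_equiv g (by simp)
  rw [← hcard]
  simp only [card_filter, Fin.sum_univ_add]

end Fin

section DecreasingList

variable {α : Type*} [Zero α] [PartialOrder α] [IsBotZeroClass α] [DecidableEq α]

theorem getD_filter_ne_zero {l : List α} (hl : l.SortedGE) (k : ℕ) :
    (l.filter (· ≠ 0)).getD k 0 = l.getD k 0 := by
  induction l generalizing k with
  | nil => rfl
  | cons a l ih =>
    have hal := List.pairwise_cons.1 hl.pairwise
    by_cases ha : a = 0
    · have hzero : ∀ b ∈ a :: l, b = 0 := by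
        simpa [ha] using hal.1
      rw [List.filter_eq_nil_iff.2 (by simpa using hzero), List.eq_replicate_of_mem hzero]
      simp
    · rw [List.filter_cons_of_pos (by simpa using ha)]
      cases k with
      | zero => rfl
      | succ k => simpa using ih hal.2.sortedGE k

end DecreasingList

section JacobiTrudi

variable {R : Type*} [CommRing R] {k : ℕ}

/-- The Jacobi–Trudi determinant of the shape `ν/σ` in a sequence `h`; it is the skew Schur
polynomial `s_{ν/σ}` when `h` is the sequence of complete homogeneous symmetric polynomials.
The shapes are encoded as integer vectors, not necessarily partitions. -/
def jacobiTrudi (h : ℤ → R) (ν σ : Fin k → ℤ) : R :=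
  Matrix.det (Matrix.of fun i j : Fin k => h (ν i - σ j - (i : ℕ) + (j : ℕ)))

theorem map_jacobiTrudi {S F : Type*} [CommRing S] [FunLike F R S] [RingHomClass F R S] (f : F)
    (h : ℤ → R) (ν σ : Fin k → ℤ) :
    f (jacobiTrudi h ν σ) = jacobiTrudi (fun z => f (h z)) ν σ :=
  RingHom.map_det (f : R →+* S) _

theorem det_eq_jacobiTrudi_of_apply_rev {A : Matrix (Fin k) (Fin k) R} {h : ℤ → R}
    {ν σ : Fin k → ℤ}
    (hA : ∀ i j, A i j = h (ν i.rev + (i : ℕ) - ((j : ℕ) + σ j.rev))) :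
    A.det = jacobiTrudi h ν σ := by
  rw [← Matrix.det_submatrix_equiv_self Fin.revPerm, jacobiTrudi]
  congr 1
  ext1 i j
  simp only [Matrix.submatrix_apply, Matrix.of_apply, Fin.revPerm_apply, hA, Fin.rev_rev,
    Fin.val_rev]
  congr 1
  omega

end JacobiTrudi

section Word

open Finset

variable {m n : ℕ} (g : Equiv.Perm (Fin (m + n)))

/-- The number of `×` symbols of `w(g)` to the right of the `○` symbol at position
`g (Fin.natAdd m j)`, which is the `j`-th one from the left, counting from `0`, if `g` is
a minimal representative. -/
def crossesRightOf (j : Fin n) : ℕ :=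
  #{i : Fin m | g (Fin.natAdd m j) < g (Fin.castAdd n i)}

/-- The number of `○` symbols of `w(g)` to the left of the `×` symbol at position
`g (Fin.castAdd n i)`, which is the `i`-th one from the left, counting from `0`, if `g` is
a minimal representative. -/
def circlesLeftOf (i : Fin m) : ℕ :=
  #{j : Fin n | g (Fin.natAdd m j) < g (Fin.castAdd n i)}

theorem crossesRightOf_eq_card_not_lt (j : Fin n) :
    crossesRightOf g j = #{i : Fin m | ¬ g (Fin.castAdd n i) < g (Fin.natAdd m j)} := by
  have hne (i : Fin m) : g (Fin.natAdd m j) ≠ g (Fin.castAdd n i) :=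
    g.injective.ne (castAdd_lt_natAdd i j).ne'
  simp only [crossesRightOf, not_lt, (hne _).le_iff_lt]

variable {g}

namespace IsMinRep

theorem strictMono_castAdd (hg : IsMinRep m n g) :
    StrictMono fun i : Fin m => g (Fin.castAdd n i) :=
  fun _ j h => hg.1 _ _ h j.isLt

theorem strictMono_natAdd (hg : IsMinRep m n g) :
    StrictMono fun j : Fin n => g (Fin.natAdd m j) :=
  fun i _ h => hg.2 _ _ ((Fin.natAdd_lt_natAdd_iff m).2 h) (Nat.le_add_right m i)

theorem antitone_crossesRightOf (hg : IsMinRep m n g) : Antitone (crossesRightOf g) :=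
  fun _ _ hjk => card_le_card <| monotone_filter_right _ fun _ _ =>
    (hg.strictMono_natAdd.monotone hjk).trans_lt

theorem val_castAdd (hg : IsMinRep m n g) (i : Fin m) :
    (g (Fin.castAdd n i) : ℕ) = i + circlesLeftOf g i := by
  rw [← card_castAdd_lt_add_card_natAdd_lt g, card_filter_lt_of_strictMono hg.strictMono_castAdd,
    circlesLeftOf]

theorem val_natAdd_add_crossesRightOf (hg : IsMinRep m n g) (j : Fin n) :
    (g (Fin.natAdd m j) : ℕ) + crossesRightOf g j = m + j := by
  have hcrosses : #{i : Fin m | g (Fin.castAdd n i) < g (Fin.natAdd m j)} +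
      crossesRightOf g j = m := by
    rw [crossesRightOf_eq_card_not_lt, card_filter_add_card_filter_not, card_fin]
  rw [← card_castAdd_lt_add_card_natAdd_lt g, card_filter_lt_of_strictMono hg.strictMono_natAdd,
    add_right_comm, hcrosses]

theorem val_rev_lt_crossesRightOf_iff (hg : IsMinRep m n g) (i : Fin m) (j : Fin n) :
    (i.rev : ℕ) < crossesRightOf g j ↔ g (Fin.natAdd m j) < g (Fin.castAdd n i) := by
  have hrev : crossesRightOf g j =
      #{k : Fin m | g (Fin.natAdd m j) < g (Fin.castAdd n k.rev)} :=
    card_equiv Fin.revPerm (by simp)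
  rw [hrev, Fin.lt_card_filter_univ_iff_apply_of_imp, Fin.rev_rev]
  exact fun k l hlk hk => hk.trans_le (hg.strictMono_castAdd.monotone (Fin.rev_le_rev.2 hlk))

theorem sign_eq_neg_one_pow_sum (hg : IsMinRep m n g) :
    Equiv.Perm.sign g = (-1) ^ ∑ j, crossesRightOf g j := by
  have hcross (i : Fin m) :
      ∏ k < Fin.castAdd n i, (if g k < g (Fin.castAdd n i) then 1 else -1 : ℤˣ) = 1 :=
    prod_eq_one fun k hk => if_pos (hg.1 _ _ (mem_Iio.1 hk) i.isLt)
  have hcircle (j : Fin n) :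
      ∏ k < Fin.natAdd m j, (if g k < g (Fin.natAdd m j) then 1 else -1 : ℤˣ) =
        (-1) ^ crossesRightOf g j := by
    have hcircles : ∏ k < j,
        (if g (Fin.natAdd m k) < g (Fin.natAdd m j) then 1 else -1 : ℤˣ) = 1 :=
      prod_eq_one fun k hk => if_pos (hg.strictMono_natAdd (mem_Iio.1 hk))
    rw [prod_Iio_natAdd, hcircles, mul_one, prod_ite, prod_const_one, one_mul, prod_const,
      crossesRightOf_eq_card_not_lt]
  rw [Equiv.Perm.sign_eq_prod_prod_Iio, Fin.prod_univ_add]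
  simp only [hcross, hcircle, prod_const_one, one_mul, prod_pow_eq_pow_sum]

end IsMinRep

end Word

section Tau

open Finset

variable {m n : ℕ} {g : Equiv.Perm (Fin (m + n))}

theorem isCross_castAdd (i : Fin m) : IsCross m n g (g (Fin.castAdd n i)) :=
  ⟨Fin.castAdd n i, i.isLt, rfl⟩

theorem not_isCross_natAdd (j : Fin n) : ¬ IsCross m n g (g (Fin.natAdd m j)) := by
  rintro ⟨i, hi, h⟩
  rw [g.injective h, Fin.val_natAdd] at hi
  omega

open scoped Classical in
theorem card_isCross_lt (p : Fin (m + n)) :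
    #{q | p < q ∧ IsCross m n g q} = #{i : Fin m | p < g (Fin.castAdd n i)} := by
  have hreindex : #{q | p < q ∧ IsCross m n g q} = #{q | p < g q ∧ IsCross m n g (g q)} :=
    (card_equiv g (by simp)).symm
  rw [hreindex]
  simp only [card_filter, Fin.sum_univ_add, isCross_castAdd, not_isCross_natAdd, and_true,
    and_false, if_false, sum_const_zero, add_zero]

open scoped Classical in
theorem filter_not_isCross :
    univ.filter (¬ IsCross m n g ·) = univ.map ((Fin.natAddEmb m).trans g.toEmbedding) := by
  ext p
  obtain ⟨q, rfl⟩ := g.surjective p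
  induction q using Fin.addCases with
  | left i => simp [isCross_castAdd, (castAdd_lt_natAdd i _).ne']
  | right j => simp [not_isCross_natAdd]

theorem tauOf_eq_filter_map :
    tauOf m n g = ((univ : Finset (Fin n)).val.map (crossesRightOf g)).filter (· ≠ 0) := by
  classical
  rw [tauOf]
  simp only [card_isCross_lt]
  rw [filter_not_isCross, map_val, Multiset.map_map]
  rfl

theorem sum_tauOf : (tauOf m n g).sum = ∑ j, crossesRightOf g j := by
  rw [tauOf_eq_filter_map, Multiset.filter_map]
  exact sum_filter_ne_zero univ

namespace IsMinRep

theorem reverse_sort_tauOf (hg : IsMinRep m n g) :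
    ((tauOf m n g).sort (· ≤ ·)).reverse = (List.ofFn (crossesRightOf g)).filter (· ≠ 0) := by
  have hsorted := hg.antitone_crossesRightOf.sortedGE_ofFn
  refine List.Perm.eq_of_sortedGE
    (Multiset.pairwise_sort _ _).sortedLE.reverse (hsorted.pairwise.filter _).sortedGE ?_
  refine (List.reverse_perm _).trans (Multiset.coe_eq_coe.1 ?_)
  rw [Multiset.sort_eq, tauOf_eq_filter_map, Fin.univ_val_map, Multiset.filter_coe]

theorem tauParts_eq_getD (hg : IsMinRep m n g) (k : ℕ) :
    tauParts m n g k = (List.ofFn (crossesRightOf g)).getD k 0 := by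
  rw [tauParts, hg.reverse_sort_tauOf,
    getD_filter_ne_zero hg.antitone_crossesRightOf.sortedGE_ofFn]

theorem tauParts_val (hg : IsMinRep m n g) (j : Fin n) :
    tauParts m n g j = crossesRightOf g j := by
  simp [hg.tauParts_eq_getD]

theorem tauParts_of_le (hg : IsMinRep m n g) {k : ℕ} (hk : n ≤ k) : tauParts m n g k = 0 := by
  rw [hg.tauParts_eq_getD, List.getD_eq_default _ _ (by simpa using hk)]

theorem conjugatePart_tauParts (hg : IsMinRep m n g) (i : Fin m) :
    conjugatePart (tauParts m n g) ((i.rev : ℕ) + 1) = circlesLeftOf g i := by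
  have hset : {k : ℕ | (i.rev : ℕ) + 1 ≤ tauParts m n g k} =
      ((univ.filter fun j : Fin n => g (Fin.natAdd m j) < g (Fin.castAdd n i)).map
        Fin.valEmbedding : Finset ℕ) := by
    ext k
    rcases lt_or_ge k n with hk | hk
    · lift k to Fin n using hk
      simp [hg.tauParts_val, ← hg.val_rev_lt_crossesRightOf_iff, Fin.val_inj]
    · simpa [hg.tauParts_of_le hk] using fun j _ => (j.isLt.trans_le hk).ne
  rw [conjugatePart, hset, Set.ncard_coe_finset, card_map, circlesLeftOf]

end IsMinRep

end Tau

section Minors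

variable {R : Type*} [CommRing R] {m n : ℕ} {g : Equiv.Perm (Fin (m + n))}

theorem IsMinRep.det_cross_columns (hg : IsMinRep m n g) {A : Matrix (Fin m) (Fin (m + n)) R}
    {h : ℤ → R} {ν : Fin m → ℤ} (hA : ∀ i j, A i j = h (ν i.rev + (i : ℕ) - (j : ℕ))) :
    (A.submatrix id fun j => g (Fin.castAdd n j)).det =
      jacobiTrudi h ν fun j => conjugatePart (tauParts m n g) ((j : ℕ) + 1) := by
  refine det_eq_jacobiTrudi_of_apply_rev fun i j => ?_
  rw [Matrix.submatrix_apply, id, hA, hg.val_castAdd, hg.conjugatePart_tauParts, Nat.cast_add]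

theorem IsMinRep.det_circle_columns (hg : IsMinRep m n g) {A : Matrix (Fin n) (Fin (m + n)) R}
    {h : ℤ → R} {ν : Fin n → ℤ}
    (hA : ∀ i j, A i j = h (ν i - ((m + i : ℕ) : ℤ) + (j : ℕ))) :
    (A.submatrix id fun j => g (Fin.natAdd m j)).det =
      jacobiTrudi h ν fun j => tauParts m n g j := by
  rw [jacobiTrudi]
  congr 1
  ext1 i j
  have hpos := hg.val_natAdd_add_crossesRightOf j
  rw [Matrix.submatrix_apply, id, hA, Matrix.of_apply, hg.tauParts_val]
  congr 1
  omega

theorem IsMinRep.intCast_sign (hg : IsMinRep m n g) :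
    ((Equiv.Perm.sign g : ℤ) : R) = (-1) ^ (tauOf m n g).sum := by
  rw [hg.sign_eq_neg_one_pow_sum, sum_tauOf]
  simp

end Minors

theorem statement8_general {R : Type*} [CommRing R] {m n : ℕ} (a b : ℤ → R) (lam : Fin n → ℤ)
    (mu : Fin m → ℤ) (A : Matrix (Fin (m + n)) (Fin (m + n)) R)
    (hAtop : ∀ i j, A (Fin.castAdd n i) j = b (mu i.rev + (i : ℕ) - (j : ℕ)))
    (hAbot : ∀ i j, A (Fin.natAdd m i) j = a (lam i - ((m + i : ℕ) : ℤ) + (j : ℕ)))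
    (g : Equiv.Perm (Fin (m + n))) (hg : IsMinRep m n g) :
    ((Equiv.Perm.sign g : ℤ) : R) *
        (A.submatrix (Fin.castAdd n) fun j => g (Fin.castAdd n j)).det *
        (A.submatrix (Fin.natAdd m) fun j => g (Fin.natAdd m j)).det =
      (-1) ^ (tauOf m n g).sum *
        jacobiTrudi b mu (fun j => conjugatePart (tauParts m n g) ((j : ℕ) + 1)) *
        jacobiTrudi a lam (fun j => tauParts m n g j) := by
  rw [hg.intCast_sign, ← hg.det_cross_columns (A := A.submatrix (Fin.castAdd n) id) hAtop,
    ← hg.det_circle_columns (A := A.submatrix (Fin.natAdd m) id) hAbot]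
  rfl

/-- Let `λ = (λ₁ ≥ … ≥ λ_n ≥ 0)`, `μ = (μ₁ ≥ … ≥ μ_m ≥ 0)` be partitions
and `x = (x₁,…,x_N)`, `y = (y₁,…,y_M)` disjoint variable sets.  Let `Mmat` be the
`(m+n) × (m+n)` matrix with entries `h_{μ_{m+1-i} + i - j}(y)` in rows `1 ≤ i ≤ m` and
`h_{λ_{i-m} - (i-m) + (j-m)}(x)` in rows `m < i ≤ m+n`.  For a minimal-length coset
representative `g` with column set `C = {g(1),…,g(m)}` (already increasing) and
`τ = τ(g)`, we have
`sgn(g) · det(Mmat[{1..m}, C]) · det(Mmat[{m+1..m+n}, Cᶜ]) = (-1)^{|τ|} s_{μ/τ'}(y) · s_{λ/τ}(x)`,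
the skew Schur polynomials being given by Jacobi–Trudi determinants (of sizes `m` and `n`). -/
theorem statement8 (m n N M : ℕ) (lam mu : ℕ → ℕ)
    (hlam_anti : Antitone lam) (hlam_len : ∀ j, n ≤ j → lam j = 0)
    (hmu_anti : Antitone mu) (hmu_len : ∀ j, m ≤ j → mu j = 0)
    (Mmat : Matrix (Fin (m + n)) (Fin (m + n)) (MvPolynomial (Fin N ⊕ Fin M) ℤ))
    (hMtop : ∀ (i j : Fin (m + n)), (i : ℕ) < m → Mmat i j =
      rename Sum.inr (hInt M ((mu (m - 1 - (i : ℕ)) : ℤ) + (i : ℕ) - (j : ℕ))))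
    (hMbot : ∀ (i j : Fin (m + n)), m ≤ (i : ℕ) → Mmat i j =
      rename Sum.inl (hInt N ((lam ((i : ℕ) - m) : ℤ) - (i : ℕ) + (j : ℕ))))
    (g : Equiv.Perm (Fin (m + n))) (hg : IsMinRep m n g) :
    ((Equiv.Perm.sign g : ℤ) : MvPolynomial (Fin N ⊕ Fin M) ℤ) *
        Matrix.det (Matrix.of fun i j : Fin m =>
          Mmat ⟨i, by omega⟩ (g ⟨j, by omega⟩)) *
        Matrix.det (Matrix.of fun i j : Fin n =>
          Mmat ⟨m + i, by omega⟩ (g ⟨m + j, by omega⟩)) =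
      (-1 : MvPolynomial (Fin N ⊕ Fin M) ℤ) ^ (tauOf m n g).sum *
        rename Sum.inr (Matrix.det (Matrix.of fun i j : Fin m =>
          hInt M ((mu i : ℤ) - conjugatePart (tauParts m n g) ((j : ℕ) + 1)
            - (i : ℕ) + (j : ℕ)))) *
        rename Sum.inl (Matrix.det (Matrix.of fun i j : Fin n =>
          hInt N ((lam i : ℤ) - tauParts m n g j - (i : ℕ) + (j : ℕ)))) := by
  have h := statement8_general (fun k => rename Sum.inl (hInt N k))
    (fun k => rename Sum.inr (hInt M k)) (fun i : Fin n => lam i) (fun i : Fin m => mu i) Mmat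
    (fun i j => by rw [hMtop _ _ i.isLt, Fin.val_rev, Nat.sub_sub, add_comm 1]; rfl)
    (fun i j => by simpa using hMbot (Fin.natAdd m i) j (by simp)) g hg
  rwa [← map_jacobiTrudi, ← map_jacobiTrudi] at h
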